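/- If Re(s) ≥ 0, then ‖Dw‖ ≤ √R·( ‖w‖ + ‖H‖ ). -/

import Mathlib

open MeasureTheory Complex

noncomputable section

/-- Partial derivative in the first (x) variable. -/
def pdx (f : ℝ → ℝ → ℂ) : ℝ → ℝ → ℂ := fun x y => deriv (fun x' => f x' y) x

/-- Partial derivative in the second (y) variable. -/
def pdy (f : ℝ → ℝ → ℂ) : ℝ → ℝ → ℂ := fun x y => deriv (fun y' => f x y') y

/-- Laplacian in the space variables. -/
def lap (f : ℝ → ℝ → ℂ) : ℝ → ℝ → ℂ := fun x y => pdx (pdx f) x y + pdy (pdy f) x y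

/-- Square of the L² norm over Ω = [0,1] × [0,1]. -/
def nsq (f : ℝ → ℝ → ℂ) : ℝ := ∫ x in (0:ℝ)..(1:ℝ), ∫ y in (0:ℝ)..(1:ℝ), ‖f x y‖ ^ 2

/-- Smoothness of a function of two real variables. -/
def SmoothFn (f : ℝ → ℝ → ℂ) : Prop := ContDiff ℝ (⊤ : ℕ∞) (fun q : ℝ × ℝ => f q.1 q.2)

/-- 1-periodicity in the first variable. -/
def PeriodicX (f : ℝ → ℝ → ℂ) : Prop := ∀ x y, f (x + 1) y = f x y

lemma SmoothFn.hasDerivAt_x {f : ℝ → ℝ → ℂ} (hf : SmoothFn f) (x y : ℝ) :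
    HasDerivAt (fun x' => f x' y) (pdx f x y) x := by
  have h : ContDiff ℝ (⊤ : ℕ∞) (fun x' : ℝ => f x' y) :=
    ContDiff.comp (g := fun q : ℝ × ℝ => f q.1 q.2) (f := fun x' : ℝ => (x', y)) hf
      (contDiff_id.prodMk contDiff_const)
  exact (h.differentiable (by simp) x).hasDerivAt

lemma SmoothFn.hasDerivAt_y {f : ℝ → ℝ → ℂ} (hf : SmoothFn f) (x y : ℝ) :
    HasDerivAt (fun y' => f x y') (pdy f x y) y := by
  have h : ContDiff ℝ (⊤ : ℕ∞) (fun y' : ℝ => f x y') :=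
    ContDiff.comp (g := fun q : ℝ × ℝ => f q.1 q.2) (f := fun y' : ℝ => (x, y')) hf
      (contDiff_const.prodMk contDiff_id)
  exact (h.differentiable (by simp) y).hasDerivAt

lemma SmoothFn.smooth_pdx {f : ℝ → ℝ → ℂ} (hf : SmoothFn f) : SmoothFn (pdx f) := by
  have h1 : ContDiff ℝ (⊤ : ℕ∞) (fun q : ℝ × ℝ =>
      fderiv ℝ (fun q : ℝ × ℝ => f q.1 q.2) q ((1, 0) : ℝ × ℝ)) :=
    (ContDiff.fderiv_right (m := (⊤ : ℕ∞)) hf (by simp)).clm_apply contDiff_const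
  have h2 : (fun q : ℝ × ℝ => pdx f q.1 q.2) = (fun q : ℝ × ℝ =>
      fderiv ℝ (fun q : ℝ × ℝ => f q.1 q.2) q ((1, 0) : ℝ × ℝ)) := by
    funext q
    have hd : HasFDerivAt (fun q : ℝ × ℝ => f q.1 q.2)
      (fderiv ℝ (fun q : ℝ × ℝ => f q.1 q.2) q) (q.1, q.2) :=
      (ContDiff.differentiable hf (by simp) q).hasFDerivAt
    have := hd.comp_hasDerivAt q.1 ((hasDerivAt_id q.1).prodMk (hasDerivAt_const q.1 q.2))
    exact this.deriv
  unfold SmoothFn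
  rw [h2]; exact h1

lemma SmoothFn.smooth_pdy {f : ℝ → ℝ → ℂ} (hf : SmoothFn f) : SmoothFn (pdy f) := by
  have h1 : ContDiff ℝ (⊤ : ℕ∞) (fun q : ℝ × ℝ =>
      fderiv ℝ (fun q : ℝ × ℝ => f q.1 q.2) q ((0, 1) : ℝ × ℝ)) :=
    (ContDiff.fderiv_right (m := (⊤ : ℕ∞)) hf (by simp)).clm_apply contDiff_const
  have h2 : (fun q : ℝ × ℝ => pdy f q.1 q.2) = (fun q : ℝ × ℝ =>
      fderiv ℝ (fun q : ℝ × ℝ => f q.1 q.2) q ((0, 1) : ℝ × ℝ)) := by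
    funext q
    have hd : HasFDerivAt (fun q : ℝ × ℝ => f q.1 q.2)
      (fderiv ℝ (fun q : ℝ × ℝ => f q.1 q.2) q) (q.1, q.2) :=
      (ContDiff.differentiable hf (by simp) q).hasFDerivAt
    have := hd.comp_hasDerivAt q.2 ((hasDerivAt_const q.2 q.1).prodMk (hasDerivAt_id q.2))
    exact this.deriv
  unfold SmoothFn
  rw [h2]; exact h1

lemma PeriodicX.pdx_per {f : ℝ → ℝ → ℂ} (hf : PeriodicX f) : PeriodicX (pdx f) := by
  intro x y
  have h : (fun x' => f (x' + 1) y) = fun x' => f x' y := funext fun x' => hf x' y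
  unfold pdx
  rw [← deriv_comp_add_const (f := fun x' => f x' y), h]

lemma cont_inner_int {f : ℝ → ℝ → ℝ} (hf : Continuous fun q : ℝ × ℝ => f q.1 q.2) :
    Continuous fun x => ∫ y in (0:ℝ)..1, f x y :=
  intervalIntegral.continuous_parametric_intervalIntegral_of_continuous' hf 0 1

lemma cont_slice {f : ℝ → ℝ → ℝ} (hf : Continuous fun q : ℝ × ℝ => f q.1 q.2) (x : ℝ) :
    Continuous fun y => f x y :=
  hf.comp (f := fun y : ℝ => (x, y)) (by fun_prop)

lemma dint_add {f g : ℝ → ℝ → ℝ} (hf : Continuous fun q : ℝ × ℝ => f q.1 q.2)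
    (hg : Continuous fun q : ℝ × ℝ => g q.1 q.2) :
    ∫ x in (0:ℝ)..1, ∫ y in (0:ℝ)..1, (f x y + g x y)
      = (∫ x in (0:ℝ)..1, ∫ y in (0:ℝ)..1, f x y) + ∫ x in (0:ℝ)..1, ∫ y in (0:ℝ)..1, g x y := by
  rw [← intervalIntegral.integral_add ((cont_inner_int hf).intervalIntegrable _ _)
    ((cont_inner_int hg).intervalIntegrable _ _)]
  congr 1; funext x
  exact intervalIntegral.integral_add ((cont_slice hf x).intervalIntegrable _ _)
    ((cont_slice hg x).intervalIntegrable _ _)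

lemma dint_smul (c : ℝ) (f : ℝ → ℝ → ℝ) :
    ∫ x in (0:ℝ)..1, ∫ y in (0:ℝ)..1, (c * f x y)
      = c * ∫ x in (0:ℝ)..1, ∫ y in (0:ℝ)..1, f x y := by
  simp [intervalIntegral.integral_const_mul]

lemma dint_mono {f g : ℝ → ℝ → ℝ} (hf : Continuous fun q : ℝ × ℝ => f q.1 q.2)
    (hg : Continuous fun q : ℝ × ℝ => g q.1 q.2)
    (h : ∀ x ∈ Set.Icc (0:ℝ) 1, ∀ y ∈ Set.Icc (0:ℝ) 1, f x y ≤ g x y) :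
    ∫ x in (0:ℝ)..1, ∫ y in (0:ℝ)..1, f x y ≤ ∫ x in (0:ℝ)..1, ∫ y in (0:ℝ)..1, g x y := by
  refine intervalIntegral.integral_mono_on zero_le_one
    ((cont_inner_int hf).intervalIntegrable _ _) ((cont_inner_int hg).intervalIntegrable _ _) ?_
  intro x hx
  exact intervalIntegral.integral_mono_on zero_le_one
    ((cont_slice hf x).intervalIntegrable _ _) ((cont_slice hg x).intervalIntegrable _ _) (h x hx)

lemma dint_dy {B B' : ℝ → ℝ → ℝ} (hc : Continuous fun q : ℝ × ℝ => B' q.1 q.2)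
    (hd : ∀ x y, HasDerivAt (fun y' => B x y') (B' x y) y) (hb : ∀ x, B x 1 = B x 0) :
    ∫ x in (0:ℝ)..1, ∫ y in (0:ℝ)..1, B' x y = 0 := by
  have : ∀ x, ∫ y in (0:ℝ)..1, B' x y = 0 := fun x => by
    rw [intervalIntegral.integral_eq_sub_of_hasDerivAt (fun y _ => hd x y)
      ((cont_slice hc x).intervalIntegrable _ _), hb, sub_self]
  simp [this]

lemma dint_dx {A A' : ℝ → ℝ → ℝ} (hc : Continuous fun q : ℝ × ℝ => A' q.1 q.2)
    (hd : ∀ x y, HasDerivAt (fun x' => A x' y) (A' x y) x) (hb : ∀ y, A 1 y = A 0 y) :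
    ∫ x in (0:ℝ)..1, ∫ y in (0:ℝ)..1, A' x y = 0 := by
  rw [intervalIntegral_intervalIntegral_swap
    ((hc.continuousOn.integrableOn_compact (isCompact_uIcc.prod isCompact_uIcc)).mono_set
      (Set.prod_mono Set.uIoc_subset_uIcc Set.uIoc_subset_uIcc))]
  exact dint_dy (B := fun y x => A x y) (B' := fun y x => A' x y)
    (hc.comp continuous_swap) (fun y x => hd x y) hb

lemma SmoothFn.cont {f : ℝ → ℝ → ℂ} (hf : SmoothFn f) :
    Continuous fun q : ℝ × ℝ => f q.1 q.2 := ContDiff.continuous hf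

lemma nsq_nonneg (f : ℝ → ℝ → ℂ) : 0 ≤ nsq f :=
  intervalIntegral.integral_nonneg zero_le_one fun _ _ =>
    intervalIntegral.integral_nonneg zero_le_one fun _ _ => by positivity

/-- The pointwise algebra behind the energy estimate. -/
lemma pointwise_energy (r y : ℝ) (s u v p F G ux uy vx vy px py uxx uyy vxx vyy : ℂ)
    (hs : 0 ≤ s.re) (hdiv : ux + vy = 0)
    (h1 : s * u + (y:ℂ) * ux + v + px = (r:ℂ) * (uxx + uyy) + F)
    (h2 : s * v + (y:ℂ) * vx + py = (r:ℂ) * (vxx + vyy) + G) :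
    r * (‖ux‖^2 + ‖uy‖^2 + ‖vx‖^2 + ‖vy‖^2) ≤
      (r * (inner ℝ u uxx + inner ℝ ux ux) + r * (inner ℝ v vxx + inner ℝ vx vx)
        - (inner ℝ u px + inner ℝ ux p)
        - y / 2 * ((inner ℝ u ux + inner ℝ ux u) + (inner ℝ v vx + inner ℝ vx v)))
      + (r * (inner ℝ u uyy + inner ℝ uy uy) + r * (inner ℝ v vyy + inner ℝ vy vy)
        - (inner ℝ v py + inner ℝ vy p))
      + (‖u‖^2 + ‖v‖^2 + 1 / 2 * (‖F‖^2 + ‖G‖^2)) := by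
  have d1 := congrArg Complex.re hdiv
  have d2 := congrArg Complex.im hdiv
  have a1 := congrArg Complex.re h1
  have a2 := congrArg Complex.im h1
  have b1 := congrArg Complex.re h2
  have b2 := congrArg Complex.im h2
  simp only [Complex.add_re, Complex.add_im, Complex.mul_re, Complex.mul_im, Complex.ofReal_re,
    Complex.ofReal_im, Complex.zero_re, Complex.zero_im, zero_mul, sub_zero, add_zero] at d1 d2 a1 a2 b1 b2
  simp only [Complex.inner, Complex.sq_norm, Complex.normSq_apply, Complex.mul_re, Complex.conj_re,
    Complex.conj_im]
  have e1 : vy.re = - ux.re := by linarith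
  have e2 : vy.im = - ux.im := by linarith
  have f1 : F.re = s.re * u.re - s.im * u.im + y * ux.re + v.re + px.re - r * (uxx.re + uyy.re) := by linarith
  have f2 : F.im = s.re * u.im + s.im * u.re + y * ux.im + v.im + px.im - r * (uxx.im + uyy.im) := by linarith
  have f3 : G.re = s.re * v.re - s.im * v.im + y * vx.re + py.re - r * (vxx.re + vyy.re) := by linarith
  have f4 : G.im = s.re * v.im + s.im * v.re + y * vx.im + py.im - r * (vxx.im + vyy.im) := by linarith
  have k : 0 ≤ s.re * (u.re^2 + u.im^2 + v.re^2 + v.im^2) := by positivity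
  have k1 : 0 ≤ (u.re + v.re)^2 + (u.im + v.im)^2 := by positivity
  have k2 : 0 ≤ (u.re - F.re)^2 + (u.im - F.im)^2 + (v.re - G.re)^2 + (v.im - G.im)^2 := by positivity
  have key : u.re * F.re + u.im * F.im + v.re * G.re + v.im * G.im =
    s.re * (u.re^2 + u.im^2 + v.re^2 + v.im^2) + y * (u.re * ux.re + u.im * ux.im)
     + y * (v.re * vx.re + v.im * vx.im) + (u.re * v.re + u.im * v.im)
     + (u.re * px.re + u.im * px.im) + (v.re * py.re + v.im * py.im)
     - r * (u.re * (uxx.re + uyy.re) + u.im * (uxx.im + uyy.im)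
       + v.re * (vxx.re + vyy.re) + v.im * (vxx.im + vyy.im)) := by
    rw [f1, f2, f3, f4]; ring
  rw [e1, e2]
  clear f1 f2 f3 f4 e1 e2 a1 a2 b1 b2 d1 d2
  linarith

/-- If Re(s) ≥ 0, then ‖Dw‖ ≤ √R·(‖w‖ + ‖H‖). -/
theorem gradient_estimate
    (R : ℝ) (hR : 0 < R) (s : ℂ)
    (u v p F G : ℝ → ℝ → ℂ)
    (hu : SmoothFn u) (hv : SmoothFn v) (hp : SmoothFn p) (hF : SmoothFn F) (hG : SmoothFn G)
    (hup : PeriodicX u) (hvp : PeriodicX v) (hpp : PeriodicX p)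
    (hFp : PeriodicX F) (hGp : PeriodicX G)
    (hub0 : ∀ x, u x 0 = 0) (hub1 : ∀ x, u x 1 = 0)
    (hvb0 : ∀ x, v x 0 = 0) (hvb1 : ∀ x, v x 1 = 0)
    (hdiv : ∀ x y, pdx u x y + pdy v x y = 0)
    (heq1 : ∀ x ∈ Set.Icc (0:ℝ) 1, ∀ y ∈ Set.Icc (0:ℝ) 1,
      s * u x y + (y:ℂ) * pdx u x y + v x y + pdx p x y
        = (1/(R:ℂ)) * lap u x y + F x y)
    (heq2 : ∀ x ∈ Set.Icc (0:ℝ) 1, ∀ y ∈ Set.Icc (0:ℝ) 1,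
      s * v x y + (y:ℂ) * pdx v x y + pdy p x y
        = (1/(R:ℂ)) * lap v x y + G x y)
    (hsre : 0 ≤ s.re) :
    Real.sqrt (nsq (pdx u) + nsq (pdy u) + nsq (pdx v) + nsq (pdy v))
      ≤ Real.sqrt R * (Real.sqrt (nsq u + nsq v) + Real.sqrt (nsq F + nsq G)) := by
  have cu := hu.cont
  have cv := hv.cont
  have cp := hp.cont
  have cF := hF.cont
  have cG := hG.cont
  have cux := hu.smooth_pdx.cont
  have cuy := hu.smooth_pdy.cont
  have cvx := hv.smooth_pdx.cont
  have cvy := hv.smooth_pdy.cont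
  have cpx := hp.smooth_pdx.cont
  have cpy := hp.smooth_pdy.cont
  have cuxx := hu.smooth_pdx.smooth_pdx.cont
  have cuyy := hu.smooth_pdy.smooth_pdy.cont
  have cvxx := hv.smooth_pdx.smooth_pdx.cont
  have cvyy := hv.smooth_pdy.smooth_pdy.cont
  set r : ℝ := 1 / R with hr
  -- fluxes
  let A : ℝ → ℝ → ℝ := fun x y => r * inner ℝ (u x y) (pdx u x y) + r * inner ℝ (v x y) (pdx v x y)
    - inner ℝ (u x y) (p x y)
    - y / 2 * (inner ℝ (u x y) (u x y) + inner ℝ (v x y) (v x y))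
  let B : ℝ → ℝ → ℝ := fun x y => r * inner ℝ (u x y) (pdy u x y) + r * inner ℝ (v x y) (pdy v x y)
    - inner ℝ (v x y) (p x y)
  let A' : ℝ → ℝ → ℝ := fun x y =>
    r * (inner ℝ (u x y) (pdx (pdx u) x y) + inner ℝ (pdx u x y) (pdx u x y))
    + r * (inner ℝ (v x y) (pdx (pdx v) x y) + inner ℝ (pdx v x y) (pdx v x y))
    - (inner ℝ (u x y) (pdx p x y) + inner ℝ (pdx u x y) (p x y))
    - y / 2 * ((inner ℝ (u x y) (pdx u x y) + inner ℝ (pdx u x y) (u x y))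
      + (inner ℝ (v x y) (pdx v x y) + inner ℝ (pdx v x y) (v x y)))
  let B' : ℝ → ℝ → ℝ := fun x y =>
    r * (inner ℝ (u x y) (pdy (pdy u) x y) + inner ℝ (pdy u x y) (pdy u x y))
    + r * (inner ℝ (v x y) (pdy (pdy v) x y) + inner ℝ (pdy v x y) (pdy v x y))
    - (inner ℝ (v x y) (pdy p x y) + inner ℝ (pdy v x y) (p x y))
  have cA : Continuous fun q : ℝ × ℝ => A' q.1 q.2 := by
    simp only [A']; fun_prop
  have cB : Continuous fun q : ℝ × ℝ => B' q.1 q.2 := by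
    simp only [B']; fun_prop
  have hA : ∫ x in (0:ℝ)..1, ∫ y in (0:ℝ)..1, A' x y = 0 := by
    refine dint_dx (A := A) cA (fun x y => ?_) (fun y => ?_)
    · have du := hu.hasDerivAt_x x y
      have dv := hv.hasDerivAt_x x y
      exact ((((du.inner ℝ (hu.smooth_pdx.hasDerivAt_x x y)).const_mul r).add
        ((dv.inner ℝ (hv.smooth_pdx.hasDerivAt_x x y)).const_mul r)).sub
        (du.inner ℝ (hp.hasDerivAt_x x y))).sub
        (((du.inner ℝ du).add (dv.inner ℝ dv)).const_mul (y / 2))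
    · have e : ∀ f, PeriodicX f → f 1 y = f 0 y := fun f hf => by simpa using hf 0 y
      simp only [A, e _ hup, e _ hvp, e _ hpp, e _ hup.pdx_per, e _ hvp.pdx_per]
  have hB : ∫ x in (0:ℝ)..1, ∫ y in (0:ℝ)..1, B' x y = 0 := by
    refine dint_dy (B := B) cB (fun x y => ?_) (fun x => ?_)
    · have du := hu.hasDerivAt_y x y
      have dv := hv.hasDerivAt_y x y
      exact (((du.inner ℝ (hu.smooth_pdy.hasDerivAt_y x y)).const_mul r).add
        ((dv.inner ℝ (hv.smooth_pdy.hasDerivAt_y x y)).const_mul r)).sub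
        (dv.inner ℝ (hp.hasDerivAt_y x y))
    · simp [B, hub0, hub1, hvb0, hvb1]
  have main := dint_mono
    (f := fun x y => r * (‖pdx u x y‖^2 + ‖pdy u x y‖^2 + ‖pdx v x y‖^2 + ‖pdy v x y‖^2))
    (g := fun x y => A' x y + B' x y
      + (‖u x y‖^2 + ‖v x y‖^2 + 1 / 2 * (‖F x y‖^2 + ‖G x y‖^2)))
    (by fun_prop) (by fun_prop)
    (fun x hx y hy => pointwise_energy r y s _ _ _ _ _ _ _ _ _ _ _ _ _ _ _ hsre (hdiv x y)
      (by have := heq1 x hx y hy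
          rw [hr]; push_cast; exact this)
      (by have := heq2 x hx y hy
          rw [hr]; push_cast; exact this))
  rw [dint_smul, dint_add (by fun_prop) (by fun_prop), dint_add (by fun_prop) (by fun_prop),
    dint_add (by fun_prop) (by fun_prop),
    dint_add (f := fun x y => A' x y + B' x y) (by fun_prop) (by fun_prop),
    dint_add cA cB, hA, hB,
    dint_add (by fun_prop) (by fun_prop), dint_add (by fun_prop) (by fun_prop), dint_smul,
    dint_add (by fun_prop) (by fun_prop)] at main
  change r * (nsq (pdx u) + nsq (pdy u) + nsq (pdx v) + nsq (pdy v))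
    ≤ 0 + 0 + (nsq u + nsq v + 1 / 2 * (nsq F + nsq G)) at main
  have n1 : 0 ≤ nsq u + nsq v := add_nonneg (nsq_nonneg _) (nsq_nonneg _)
  have n2 : 0 ≤ nsq F + nsq G := add_nonneg (nsq_nonneg _) (nsq_nonneg _)
  generalize nsq (pdx u) + nsq (pdy u) + nsq (pdx v) + nsq (pdy v) = D at main ⊢
  generalize nsq u + nsq v = W at *
  generalize nsq F + nsq G = H at *
  have hD : D ≤ R * (W + 1 / 2 * H) := by
    rw [hr, one_div, inv_mul_le_iff₀ hR] at main
    linarith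
  apply Real.sqrt_le_iff.mpr
  refine ⟨by positivity, hD.trans ?_⟩
  rw [mul_pow, Real.sq_sqrt hR.le]
  apply mul_le_mul_of_nonneg_left _ hR.le
  have := mul_nonneg (Real.sqrt_nonneg W) (Real.sqrt_nonneg H)
  nlinarith [Real.sq_sqrt n1, Real.sq_sqrt n2]

end
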